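/- Let G be a finite connected simple graph with n vertices, maximum degree δ, and diameter d, and let w be a walk on G following the LFV-v policy. Then w covers G within n·(δ+1)^d steps: for every vertex v of G there exists a time t ≤ n·(δ+1)^d with w(t) = v. (This is the paper's upper bound of order n·δ^d on the exploration time of LFV-v.) -/

import Mathlib

/-!
Each step leaving a vertex `u` is determined by its endpoint together with the number of earlier
visits to that endpoint. If `x` is a neighbor of `u`, the policy bounds this number by the number
of visits to `x`, so `u` is visited at most `deg u` times as often as `x`, up to an additive
constant. Iterating along shortest paths, no vertex is visited more than about `(δ + 1) ^ d` times
as often as a given `v`. Since the visits up to time `t` add up to `t + 1`, for large `t` some of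
them are to `v`.
-/

/-- The number of visits to `v` up to and including time `t`, the `freq_w(v, t)` of the paper. -/
noncomputable def visitCount {α : Type*} (w : ℕ → α) (v : α) (t : ℕ) : ℕ :=
  {s : ℕ | s ≤ t ∧ w s = v}.ncard

section VisitCount

variable {α : Type*} (w : ℕ → α)

theorem visitCount_eq_card_filter [DecidableEq α] (v : α) (t : ℕ) :
    visitCount w v t = ((Finset.range (t + 1)).filter (w · = v)).card := by
  rw [visitCount, ← Set.ncard_coe_finset]
  congr 1
  ext s
  simp

theorem visitCount_eq_count [DecidableEq α] (v : α) (t : ℕ) :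
    visitCount w v t = Nat.count (w · = v) (t + 1) := by
  rw [visitCount_eq_card_filter, Nat.count_eq_card_filter_range]

theorem visitCount_mono (v : α) : Monotone (visitCount w v) := by
  classical
  intro s t hst
  simpa only [visitCount_eq_count] using Nat.count_monotone _ (Nat.succ_le_succ hst)

theorem visitCount_pos_iff {v : α} {t : ℕ} : 0 < visitCount w v t ↔ ∃ s ≤ t, w s = v := by
  classical
  simp [visitCount_eq_card_filter, Finset.card_pos, Finset.filter_nonempty_iff]

theorem sum_visitCount [Fintype α] (t : ℕ) : ∑ v, visitCount w v t = t + 1 := by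
  classical
  have hfibers := Finset.card_eq_sum_card_fiberwise (f := w) (s := Finset.range (t + 1))
    (t := Finset.univ) fun _ _ ↦ Finset.mem_coe.mpr (Finset.mem_univ _)
  simpa only [visitCount_eq_card_filter, Finset.card_range] using hfibers.symm

theorem injective_prodMk_visitCount_succ :
    Function.Injective fun s ↦ (w (s + 1), visitCount w (w (s + 1)) s) := by
  classical
  intro s t hst
  obtain ⟨hvertex, hcount⟩ := Prod.mk.inj hst
  rw [← hvertex, visitCount_eq_count, visitCount_eq_count] at hcount
  exact Nat.succ_injective (Nat.count_injective (p := (w · = w (s + 1))) rfl hvertex.symm hcount)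

end VisitCount

/-- `w` is an infinite walk on `G` following the least-frequently-visited-vertex policy LFV-v:
each step goes to a neighbor that has so far been visited the least. -/
structure IsLFVWalk {V : Type*} (G : SimpleGraph V) (w : ℕ → V) : Prop where
  adj_succ (t : ℕ) : G.Adj (w t) (w (t + 1))
  visitCount_succ_le (t : ℕ) (u : V) :
    G.Adj (w t) u → visitCount w (w (t + 1)) t ≤ visitCount w u t

namespace IsLFVWalk

variable {V : Type*} {G : SimpleGraph V} {w : ℕ → V}

theorem visitCount_le_degree_mul (hw : IsLFVWalk G w) {u x : V} [Fintype (G.neighborSet u)]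
    (hux : G.Adj u x) (t : ℕ) :
    visitCount w u t ≤ G.degree u * (visitCount w x t + 1) := by
  classical
  rw [visitCount_eq_card_filter, ← G.card_neighborFinset_eq_degree,
    ← Finset.card_range (visitCount w x t + 1), ← Finset.card_product]
  refine Finset.card_le_card_of_injOn _ (fun s hs ↦ ?_) (injective_prodMk_visitCount_succ w).injOn
  obtain ⟨hst, rfl⟩ := Finset.mem_filter.mp hs
  have hcount : visitCount w (w (s + 1)) s ≤ visitCount w x t :=
    (hw.visitCount_succ_le s x hux).trans (visitCount_mono w x (Finset.mem_range_succ_iff.mp hst))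
  exact Finset.mem_product.mpr
    ⟨(G.mem_neighborFinset _ _).mpr (hw.adj_succ s), Finset.mem_range_succ_iff.mpr hcount⟩

theorem visitCount_add_one_le_pow_length_mul [G.LocallyFinite] {δ : ℕ} (hw : IsLFVWalk G w)
    (hδ : ∀ u, G.degree u ≤ δ) {u v : V} (p : G.Walk u v) (t : ℕ) :
    visitCount w u t + 1 ≤ (δ + 1) ^ p.length * (visitCount w v t + 1) := by
  induction p with
  | nil => simp
  | @cons u x v hux p ih =>
    calc visitCount w u t + 1
        ≤ δ * (visitCount w x t + 1) + 1 := by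
          gcongr
          exact (hw.visitCount_le_degree_mul hux t).trans (Nat.mul_le_mul_right _ (hδ u))
      _ ≤ (δ + 1) * (visitCount w x t + 1) := by linarith
      _ ≤ (δ + 1) * ((δ + 1) ^ p.length * (visitCount w v t + 1)) := by gcongr
      _ = (δ + 1) ^ (SimpleGraph.Walk.cons hux p).length * (visitCount w v t + 1) := by
          rw [SimpleGraph.Walk.length_cons]; ring

theorem add_card_le_card_mul_pow_mul_visitCount [Fintype V] [G.LocallyFinite] {δ d : ℕ}
    (hw : IsLFVWalk G w) (hconn : G.Connected) (hδ : ∀ u, G.degree u ≤ δ) {v : V}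
    (hd : ∀ u, G.dist u v ≤ d) (t : ℕ) :
    t + 1 + Fintype.card V ≤ Fintype.card V * (δ + 1) ^ d * (visitCount w v t + 1) := by
  have hshare (u : V) : visitCount w u t + 1 ≤ (δ + 1) ^ d * (visitCount w v t + 1) := by
    obtain ⟨p, hp⟩ := hconn.exists_walk_length_eq_dist u v
    refine (hw.visitCount_add_one_le_pow_length_mul hδ p t).trans ?_
    gcongr
    · exact Nat.le_add_left 1 δ
    · exact hp.trans_le (hd u)
  calc t + 1 + Fintype.card V
      = ∑ u, (visitCount w u t + 1) := by
        simp [Finset.sum_add_distrib, sum_visitCount]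
    _ ≤ ∑ _u : V, (δ + 1) ^ d * (visitCount w v t + 1) := Finset.sum_le_sum fun u _ ↦ hshare u
    _ = Fintype.card V * (δ + 1) ^ d * (visitCount w v t + 1) := by
        rw [Finset.sum_const, Finset.card_univ, smul_eq_mul, mul_assoc]

end IsLFVWalk

/-- If `G` is a finite connected simple graph on `n` vertices with maximum degree `δ` and
diameter `d`, then every walk on `G` following the LFV-v policy covers `G` within
`n * (δ + 1) ^ d` steps. -/
theorem lfv_v_cover_time_upper_bound {V : Type*} [Fintype V] (G : SimpleGraph V)
    (hconn : G.Connected)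
    (n : ℕ) (hn : n = Fintype.card V)
    -- `δ` is the maximum degree of `G`
    (δ : ℕ) (hδ : IsGreatest {k : ℕ | ∃ v : V, {u : V | G.Adj v u}.ncard = k} δ)
    -- `d` is the diameter of `G`
    (d : ℕ) (hd : IsGreatest {k : ℕ | ∃ u v : V, G.dist u v = k} d)
    (w : ℕ → V)
    -- `w` is a walk on `G`
    (hwalk : ∀ t : ℕ, G.Adj (w t) (w (t + 1)))
    -- `w` follows the LFV-v policy
    (hpol : ∀ t : ℕ, ∀ u : V, G.Adj (w t) u →
      {t' : ℕ | t' ≤ t ∧ w t' = w (t + 1)}.ncard ≤ {t' : ℕ | t' ≤ t ∧ w t' = u}.ncard) :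
    ∀ v : V, ∃ t : ℕ, t ≤ n * (δ + 1) ^ d ∧ w t = v := by
  classical
  intro v
  have hw : IsLFVWalk G w := ⟨hwalk, hpol⟩
  have hdegree (u : V) : G.degree u ≤ δ :=
    hδ.2 ⟨u, Set.ncard_eq_toFinset_card' (G.neighborSet u)⟩
  have hdist (u : V) : G.dist u v ≤ d := hd.2 ⟨u, v, rfl⟩
  have hbound :=
    hw.add_card_le_card_mul_pow_mul_visitCount hconn hdegree hdist (n * (δ + 1) ^ d)
  rw [← hn] at hbound
  refine (visitCount_pos_iff w).mp (Nat.pos_of_ne_zero fun hzero ↦ ?_)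
  rw [hzero, zero_add, mul_one] at hbound
  lia
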